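/- If D is a digraph of order n ≤ 8, then dG(D) + dG(D^c) ≤ n + 2, where D^c denotes the complement of D. -/

import Mathlib

/-!
Only a weak trace of the greedy rule matters: a vertex `v` of color `j` has both an out-neighbor
and an in-neighbor in every class of color `1 ≤ i < j` (`IsGrundy`), since it closes a directed
cycle with that class while the class itself is acyclic (`exists_isGrundy_card_eq_digrundy`).

Let `f` and `g` be such colorings of `D` and of its complement, with `a` and `b` colors. Let `S` be
the set of vertices that are alone in their `f`-class and `W` its complement. Any two vertices of
`S` are joined in `D` in both directions, so `S` spans no arc of the complement and at most one
`g`-class lies inside `S`; hence `b ≤ |W| + 1`. Since the other `f`-classes have at least two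
elements, `2 * a ≤ 2 * n - |W|`, so `2 * a + b ≤ 2 * n + 1` (`IsGrundy.two_mul_card_add_card_le`).
Combined with the symmetric inequality and `n ≤ 8`, the assumption `a + b ≥ n + 3` leaves, up to
exchanging the roles of `f` and `g`, only `b = 5` and `n = a + 2`.

There everything is tight: `W` consists of two `f`-classes of size two, `g` is injective on `W`, and
exactly one `g`-class, of color `k`, lies in `S`.
* If `k = 1`, the four vertices of `W` are pairwise joined in both directions in the complement, so
  no arc of `D` joins the two `f`-classes in `W`, although one of them precedes the other.
* If `k > 1`, let `w₁` be the vertex of `W` with `g w₁ = 1` and `w` its `f`-partner. Each `x` with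
  `g x = k` has an arc to `w₁` in the complement, which forces the arc from `x` to `w` to be in `D`.
  But `g w > k` requires a complement arc to `w` from the class `k`, and `g w < k` requires
  complement arcs to `w` from all vertices of that class.
-/

/-
Common definitions.

A digraph `D : Digraph V` on a finite vertex type `V` is loopless when
`∀ v, ¬ D.Adj v v` (this appears as a hypothesis in the theorems below).
-/

namespace Paper

open Function

variable {V : Type*}

/-- A set `S` of vertices of `D` is acyclic if the arc relation restricted to `S`
admits no vertex with a nonempty directed walk from itself back to itself
(i.e. the subdigraph induced on `S` has no directed cycle). -/
def AcyclicSet (D : Digraph V) (S : Set V) : Prop :=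
  ∀ v : V, ¬ Relation.TransGen (fun a b => a ∈ S ∧ b ∈ S ∧ D.Adj a b) v v

/-- An acyclic coloring: every color class is acyclic. -/
def IsAcyclicColoring (D : Digraph V) {k : ℕ} (c : V → Fin k) : Prop :=
  ∀ i : Fin k, AcyclicSet D {v | c v = i}

/-- A complete coloring: for every ordered pair of distinct colors there is an arc
from a vertex of the first color to a vertex of the second color. -/
def IsCompleteColoring (D : Digraph V) {k : ℕ} (c : V → Fin k) : Prop :=
  ∀ i j : Fin k, i ≠ j → ∃ u v : V, D.Adj u v ∧ c u = i ∧ c v = j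

/-- The dichromatic number `dc(D)`: the least number of colors in an acyclic coloring. -/
noncomputable def dichromatic (D : Digraph V) [Fintype V] : ℕ :=
  sInf {k : ℕ | ∃ c : V → Fin k, IsAcyclicColoring D c}

/-- The diachromatic number `dac(D)`: the largest number of colors in an acyclic
complete coloring (a coloring "with `k` colors" uses all `k` colors, i.e. is surjective). -/
noncomputable def diachromatic (D : Digraph V) [Fintype V] : ℕ :=
  sSup {k : ℕ | ∃ c : V → Fin k,
    Surjective c ∧ IsAcyclicColoring D c ∧ IsCompleteColoring D c}

/-- The color (a positive integer; `1` is the first color) that the greedy algorithm,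
run along the vertex ordering `e` (position `0` first), assigns to the vertex in
position `i`: namely the smallest positive color whose current class stays acyclic
after adding this vertex (a fresh color has an empty class, so for a loopless digraph
this in particular uses a new color exactly when the vertex forms a directed cycle
with every currently used class). -/
noncomputable def greedyColorAt (D : Digraph V) [Fintype V]
    (e : Fin (Fintype.card V) ≃ V) (i : Fin (Fintype.card V)) : ℕ :=
  sInf {c : ℕ | 1 ≤ c ∧
    AcyclicSet D (insert (e i)
      {v : V | ∃ j : Fin (Fintype.card V), ∃ _ : j < i, e j = v ∧ greedyColorAt D e j = c})}
termination_by i.val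
decreasing_by exact ‹_›

/-- The greedy coloring of `D` with respect to the vertex ordering `e`. -/
noncomputable def greedyColoring (D : Digraph V) [Fintype V]
    (e : Fin (Fintype.card V) ≃ V) : V → ℕ :=
  fun v => greedyColorAt D e (e.symm v)

/-- The number of colors used by the greedy coloring with respect to `e`. -/
noncomputable def greedyCount (D : Digraph V) [Fintype V]
    (e : Fin (Fintype.card V) ≃ V) : ℕ :=
  (Finset.univ.image (greedyColoring D e)).card

/-- The digrundy number `dG(D)`: the largest number of colors used by a greedy
coloring, over all orderings of the vertices. -/
noncomputable def digrundy (D : Digraph V) [Fintype V] : ℕ :=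
  sSup {k : ℕ | ∃ e : Fin (Fintype.card V) ≃ V, greedyCount D e = k}

/-- The complement of a digraph: arcs are exactly the ordered pairs of distinct
vertices that are not arcs of `D`. -/
def digraphCompl (D : Digraph V) : Digraph V :=
  ⟨fun u v => u ≠ v ∧ ¬ D.Adj u v⟩

/-- The maximum out-degree `Δ⁺(D)`. -/
noncomputable def maxOutDegree (D : Digraph V) [Fintype V] : ℕ :=
  ⨆ v : V, {u : V | D.Adj v u}.ncard

/-- The maximum in-degree `Δ⁻(D)`. -/
noncomputable def maxInDegree (D : Digraph V) [Fintype V] : ℕ :=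
  ⨆ v : V, {u : V | D.Adj u v}.ncard

/-- The clique number `ω(D)`: the maximum size of a set of vertices every two of
which are joined by arcs in both directions. -/
noncomputable def cliqueNumber (D : Digraph V) [Fintype V] : ℕ :=
  sSup {k : ℕ | ∃ S : Finset V, S.card = k ∧ ∀ u ∈ S, ∀ v ∈ S, u ≠ v → D.Adj u v}

/-- The subdigraph of `D` induced on a set `S` of vertices. -/
def induceD (D : Digraph V) (S : Set V) : Digraph S :=
  ⟨fun u v => D.Adj u v⟩

/-- A parsimonious coloring along the vertex ordering `e`: an acyclic coloring, built
along `e`, in which each vertex must receive an already-used color whenever some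
existing color class remains acyclic upon adding the vertex, and receives the smallest
unused positive integer only if adding it to every existing class creates a directed
cycle. -/
def IsParsimonious (D : Digraph V) [Fintype V]
    (e : Fin (Fintype.card V) ≃ V) (c : V → ℕ) : Prop :=
  (∀ i : ℕ, AcyclicSet D {v | c v = i}) ∧
  ∀ i : Fin (Fintype.card V),
    ((∃ d : ℕ, (∃ j, j < i ∧ c (e j) = d) ∧
        AcyclicSet D (insert (e i) {v : V | ∃ j, j < i ∧ e j = v ∧ c v = d})) →
      ∃ j, j < i ∧ c (e j) = c (e i)) ∧
    ((¬ ∃ d : ℕ, (∃ j, j < i ∧ c (e j) = d) ∧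
        AcyclicSet D (insert (e i) {v : V | ∃ j, j < i ∧ e j = v ∧ c v = d})) →
      c (e i) = sInf {m : ℕ | 1 ≤ m ∧ ∀ j, j < i → c (e j) ≠ m})

/-- The parsimonious `e`-coloring number `dc_e(D)`: the minimum number of colors in a
parsimonious coloring along `e`. -/
noncomputable def parsimoniousNumber (D : Digraph V) [Fintype V]
    (e : Fin (Fintype.card V) ≃ V) : ℕ :=
  sInf {k : ℕ | ∃ c : V → ℕ, IsParsimonious D e c ∧ (Finset.univ.image c).card = k}

/-- The diochromatic number `dc^o(D)`: the maximum of the parsimonious coloring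
numbers over all orderings of the vertices. -/
noncomputable def diochromatic (D : Digraph V) [Fintype V] : ℕ :=
  sSup {k : ℕ | ∃ e : Fin (Fintype.card V) ≃ V, parsimoniousNumber D e = k}

end Paper

namespace Paper

/-! ### Grundy-type colorings and the counting bound -/

/-- The local property of a first-fit acyclic coloring `f` of the digraph with arc relation `R`:
each vertex has an out-neighbor and an in-neighbor in every class of smaller positive color.
Acyclicity of the classes is not included. -/
structure IsGrundy {V : Type*} (R : V → V → Prop) (f : V → ℕ) : Prop where
  one_le : ∀ v, 1 ≤ f v
  exists_out : ∀ v i, 1 ≤ i → i < f v → ∃ u, f u = i ∧ R v u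
  exists_in : ∀ v i, 1 ≤ i → i < f v → ∃ u, f u = i ∧ R u v

open Classical in
/-- The vertices that are not alone in their `f`-class. -/
noncomputable def sharedVerts {V : Type*} [Fintype V] (f : V → ℕ) : Finset V :=
  Finset.univ.filter fun v => ∃ u, f u = f v ∧ u ≠ v

section Counting

variable {V : Type*} [Fintype V] {R R' : V → V → Prop} {f g : V → ℕ}

lemma mem_sharedVerts {v : V} : v ∈ sharedVerts f ↔ ∃ u, f u = f v ∧ u ≠ v := by
  simp [sharedVerts]

lemma eq_of_notMem_sharedVerts {x u : V} (hx : x ∉ sharedVerts f) (h : f u = f x) : u = x := by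
  by_contra hne
  exact hx (mem_sharedVerts.2 ⟨u, h, hne⟩)

lemma mem_sharedVerts_of_eq {w u : V} (hw : w ∈ sharedVerts f) (h : f u = f w) :
    u ∈ sharedVerts f := by
  by_contra hu
  have := eq_of_notMem_sharedVerts hu h.symm
  exact hu (this ▸ hw)

/-- A vertex alone in its class has arcs in both directions with every vertex of larger color. -/
lemma IsGrundy.adj_of_lt (hf : IsGrundy R f) {x w : V} (hx : x ∉ sharedVerts f)
    (h : f x < f w) : R x w ∧ R w x := by
  obtain ⟨u, hu, h1⟩ := hf.exists_out w (f x) (hf.one_le x) h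
  obtain ⟨u', hu', h2⟩ := hf.exists_in w (f x) (hf.one_le x) h
  rw [eq_of_notMem_sharedVerts hx hu] at h1
  rw [eq_of_notMem_sharedVerts hx hu'] at h2
  exact ⟨h2, h1⟩

lemma IsGrundy.adj_of_ne (hf : IsGrundy R f) {x y : V} (hx : x ∉ sharedVerts f)
    (hy : y ∉ sharedVerts f) (h : f x ≠ f y) : R x y := by
  rcases lt_or_gt_of_ne h with h | h
  · exact (hf.adj_of_lt hx h).1
  · exact (hf.adj_of_lt hy h).2

/-- Vertices alone in their `f`-classes are joined by `R`, hence not by a disjoint relation `R'`: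
every `R'`-arc from such a vertex to another `g`-class ends in `sharedVerts f`. -/
lemma IsGrundy.mem_sharedVerts_of_adj (hf : IsGrundy R f) (hd : ∀ u v, R u v → ¬ R' u v)
    {x u : V} (hx : x ∉ sharedVerts f) (hxu : g u ≠ g x) (h : R' x u) : u ∈ sharedVerts f := by
  by_contra hu
  by_cases hfe : f x = f u
  · exact hxu (congrArg g (eq_of_notMem_sharedVerts hx hfe.symm))
  · exact hd _ _ (hf.adj_of_ne hx hu hfe) h

open Classical in
lemma card_image_eq_add :
    (Finset.univ.image f).card + (sharedVerts f).card
      = Fintype.card V + ((sharedVerts f).image f).card := by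
  have h1 : Finset.univ.image f = (sharedVerts f)ᶜ.image f ∪ (sharedVerts f).image f := by
    rw [← Finset.image_union]
    congr 1
    ext v
    simp [em']
  have h2 : Disjoint ((sharedVerts f)ᶜ.image f) ((sharedVerts f).image f) := by
    rw [Finset.disjoint_left]
    intro c hc hc'
    obtain ⟨x, hx, rfl⟩ := Finset.mem_image.1 hc
    obtain ⟨w, hw, hwx⟩ := Finset.mem_image.1 hc'
    exact (Finset.mem_compl.1 hx) (mem_sharedVerts_of_eq hw hwx.symm)
  have h3 : ((sharedVerts f)ᶜ.image f).card = (sharedVerts f)ᶜ.card := by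
    apply Finset.card_image_of_injOn
    intro x _ y hy hxy
    exact eq_of_notMem_sharedVerts (by simpa using hy) hxy
  have h4 := Finset.card_add_card_compl (sharedVerts f)
  rw [h1, Finset.card_union_of_disjoint h2, h3]
  omega

open Classical in
lemma two_le_card_fiber {w : V} (hw : w ∈ sharedVerts f) :
    2 ≤ ((sharedVerts f).filter fun v => f v = f w).card := by
  obtain ⟨u, hu, hne⟩ := mem_sharedVerts.1 hw
  have : ({u, w} : Finset V) ⊆ (sharedVerts f).filter fun v => f v = f w := by
    intro v hv
    rcases Finset.mem_insert.1 hv with rfl | hv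
    · exact Finset.mem_filter.2 ⟨mem_sharedVerts_of_eq hw hu, hu⟩
    · rw [Finset.mem_singleton.1 hv]
      exact Finset.mem_filter.2 ⟨hw, rfl⟩
  simpa [Finset.card_pair hne] using Finset.card_le_card this

open Classical in
lemma two_mul_card_image_sharedVerts_le :
    2 * ((sharedVerts f).image f).card ≤ (sharedVerts f).card := by
  rw [Finset.card_eq_sum_card_image f (sharedVerts f), mul_comm, ← smul_eq_mul]
  apply Finset.card_nsmul_le_sum
  intro c hc
  obtain ⟨w, hw, rfl⟩ := Finset.mem_image.1 hc
  exact two_le_card_fiber hw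

open Classical in
/-- At most one `g`-class avoids `sharedVerts f`. -/
lemma IsGrundy.card_image_le (hf : IsGrundy R f) (hg : IsGrundy R' g)
    (hd : ∀ u v, R u v → ¬ R' u v) :
    (Finset.univ.image g).card ≤ ((sharedVerts f).image g).card + 1 := by
  have key : ∀ x y : V, g x ∉ (sharedVerts f).image g → g y ∉ (sharedVerts f).image g →
      ¬ g x < g y := by
    intro x y hx hy h
    obtain ⟨u, hu, hyu⟩ := hg.exists_out y (g x) (hg.one_le x) h
    have hy' : y ∉ sharedVerts f := fun hh => hy (Finset.mem_image_of_mem g hh)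
    have := hf.mem_sharedVerts_of_adj (g := g) hd hy' (by omega) hyu
    exact hx (hu ▸ Finset.mem_image_of_mem g this)
  have h1 : (Finset.univ.image g \ (sharedVerts f).image g).card ≤ 1 := by
    rw [Finset.card_le_one]
    intro c hc d hdm
    obtain ⟨hc1, hc2⟩ := Finset.mem_sdiff.1 hc
    obtain ⟨hd1, hd2⟩ := Finset.mem_sdiff.1 hdm
    obtain ⟨x, -, rfl⟩ := Finset.mem_image.1 hc1
    obtain ⟨y, -, rfl⟩ := Finset.mem_image.1 hd1
    have := key x y hc2 hd2
    have := key y x hd2 hc2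
    omega
  have h2 := Finset.card_le_card_sdiff_add_card
    (s := Finset.univ.image g) (t := (sharedVerts f).image g)
  omega

open Classical in
lemma IsGrundy.two_mul_card_add_card_le (hf : IsGrundy R f) (hg : IsGrundy R' g)
    (hd : ∀ u v, R u v → ¬ R' u v) :
    2 * (Finset.univ.image f).card + (Finset.univ.image g).card ≤ 2 * Fintype.card V + 1 := by
  have h1 := hf.card_image_le hg hd
  have h2 := two_mul_card_image_sharedVerts_le (f := f)
  have h3 := card_image_eq_add (f := f)
  have h4 := Finset.card_image_le (s := sharedVerts f) (f := g)
  omega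

/-! ### The tight case -/

open Classical in
/-- When `sharedVerts f` is made of two classes and has four elements, each class is a pair. -/
lemma eq_or_eq_of_tight (hW : (sharedVerts f).card = 4)
    (hI : ((sharedVerts f).image f).card = 2) {p q u : V} (hp : p ∈ sharedVerts f)
    (hpq : f q = f p) (hne : q ≠ p) (hu : f u = f p) : u = p ∨ u = q := by
  by_contra hcon
  rw [not_or] at hcon
  have hsum := Finset.card_eq_sum_card_image f (sharedVerts f)
  obtain ⟨c, d, hcd, hcdI⟩ := Finset.card_eq_two.1 hI
  rw [hcdI, Finset.sum_pair hcd] at hsum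
  have hfib : ∀ e ∈ (sharedVerts f).image f,
      2 ≤ ((sharedVerts f).filter fun v => f v = e).card := by
    intro e he
    obtain ⟨w, hw, rfl⟩ := Finset.mem_image.1 he
    exact two_le_card_fiber hw
  have h3 : 3 ≤ ((sharedVerts f).filter fun v => f v = f p).card := by
    have hsub : ({u, q, p} : Finset V) ⊆ (sharedVerts f).filter fun v => f v = f p := by
      intro v hv
      have hv' : f v = f p := by
        simp only [Finset.mem_insert, Finset.mem_singleton] at hv
        rcases hv with rfl | rfl | rfl <;> simp [*]
      exact Finset.mem_filter.2 ⟨mem_sharedVerts_of_eq hp hv', hv'⟩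
    have hc3 : ({u, q, p} : Finset V).card = 3 :=
      Finset.card_eq_three.2 ⟨u, q, p, hcon.2, hcon.1, hne, rfl⟩
    exact hc3 ▸ Finset.card_le_card hsub
  have hc := hfib c (by simp [hcdI])
  have hd := hfib d (by simp [hcdI])
  have hpI : f p ∈ (sharedVerts f).image f := Finset.mem_image_of_mem f hp
  rw [hcdI, Finset.mem_insert, Finset.mem_singleton] at hpI
  rcases hpI with h | h <;> rw [h] at h3 <;> omega

open Classical in
lemma IsGrundy.not_tight (hf : IsGrundy R f) (hg : IsGrundy R' g)
    (hd : ∀ u v, R u v → ¬ R' u v) (hb : (Finset.univ.image g).card = 5)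
    (ha : Fintype.card V = (Finset.univ.image f).card + 2) : False := by
  have h1 := hf.card_image_le hg hd
  have h2 := two_mul_card_image_sharedVerts_le (f := f)
  have h3 := card_image_eq_add (f := f)
  have h4 := Finset.card_image_le (s := sharedVerts f) (f := g)
  have hW : (sharedVerts f).card = 4 := by omega
  have hI : ((sharedVerts f).image f).card = 2 := by omega
  have hIg : ((sharedVerts f).image g).card = 4 := by omega
  have hinj : Set.InjOn g (sharedVerts f : Set V) := Finset.card_image_iff.1 (by omega)
  have hsub : (sharedVerts f).image g ⊆ Finset.univ.image g :=
    Finset.image_subset_image (Finset.subset_univ _)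
  -- `k = g x₀` is the only `g`-color missing on `sharedVerts f`.
  have hcard1 : (Finset.univ.image g \ (sharedVerts f).image g).card = 1 := by
    rw [Finset.card_sdiff_of_subset hsub]; omega
  obtain ⟨k, hk⟩ := Finset.card_eq_one.1 hcard1
  have hkm : k ∈ Finset.univ.image g \ (sharedVerts f).image g := by simp [hk]
  obtain ⟨hk1, hk2⟩ := Finset.mem_sdiff.1 hkm
  obtain ⟨x₀, -, hx₀⟩ := Finset.mem_image.1 hk1
  have hcol : ∀ v, g v ≠ k → ∃ w ∈ sharedVerts f, g w = g v := by
    intro v hv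
    by_contra hcon
    have : g v ∈ Finset.univ.image g \ (sharedVerts f).image g := by
      refine Finset.mem_sdiff.2 ⟨Finset.mem_image_of_mem g (Finset.mem_univ v), ?_⟩
      intro hm
      obtain ⟨w, hw, hwv⟩ := Finset.mem_image.1 hm
      exact hcon ⟨w, hw, hwv⟩
    rw [hk] at this
    exact hv (Finset.mem_singleton.1 this)
  have hkS : ∀ x, g x = k → x ∉ sharedVerts f := by
    rintro x hx hxW
    exact hk2 (hx ▸ Finset.mem_image_of_mem g hxW)
  have hkge : 1 ≤ k := hx₀ ▸ hg.one_le x₀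
  rcases Nat.eq_or_lt_of_le hkge with hkone | hkgt
  -- A vertex of color larger than `k` needs a neighbor in the class `k`, so it is in `W`.
  · have hlarge : ∀ v, g v ≠ k → v ∈ sharedVerts f := by
      intro v hv
      by_contra hvS
      have := hg.one_le v
      obtain ⟨u, hu, hvu⟩ := hg.exists_out v k hkge (by omega)
      exact hkS u hu (hf.mem_sharedVerts_of_adj (g := g) hd hvS (by omega) hvu)
    have hclique : ∀ p ∈ sharedVerts f, ∀ q ∈ sharedVerts f, p ≠ q → R' p q := by
      intro p hp q hq hpq
      have hgpq : g p ≠ g q := fun h => hpq (hinj hp hq h)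
      have hpk : g p ≠ k := fun h => hkS p h hp
      have hqk : g q ≠ k := fun h => hkS q h hq
      rcases lt_or_gt_of_ne hgpq with h | h
      · obtain ⟨u, hu, huq⟩ := hg.exists_in q (g p) (hg.one_le p) h
        rwa [hinj (hlarge u (by omega)) hp hu] at huq
      · obtain ⟨u, hu, hpu⟩ := hg.exists_out p (g q) (hg.one_le q) h
        rwa [hinj (hlarge u (by omega)) hq hu] at hpu
    obtain ⟨c, d, hcd, hcdI⟩ := Finset.card_eq_two.1 hI
    have hc : c ∈ (sharedVerts f).image f := by simp [hcdI]
    have hdI : d ∈ (sharedVerts f).image f := by simp [hcdI]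
    obtain ⟨p, hp, rfl⟩ := Finset.mem_image.1 hc
    obtain ⟨q, hq, rfl⟩ := Finset.mem_image.1 hdI
    have main : ∀ p ∈ sharedVerts f, ∀ q ∈ sharedVerts f, ¬ f p < f q := by
      intro p hp q hq h
      obtain ⟨u, hu, hqu⟩ := hf.exists_out q (f p) (hf.one_le p) h
      refine hd _ _ hqu (hclique q hq u (mem_sharedVerts_of_eq hp hu) ?_)
      rintro rfl
      omega
    rcases lt_or_gt_of_ne hcd with h | h
    · exact main p hp q hq h
    · exact main q hq p hp h
  -- `g w₁ = 1`, and `w` is the partner of `w₁` in its `f`-class.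
  · obtain ⟨u₁, hu₁, -⟩ := hg.exists_out x₀ 1 le_rfl (by omega)
    obtain ⟨w₁, hw₁, hgw₁'⟩ := hcol u₁ (by omega)
    have hgw₁ : g w₁ = 1 := hgw₁'.trans hu₁
    obtain ⟨w, hww₁, hne⟩ := mem_sharedVerts.1 hw₁
    have hw : w ∈ sharedVerts f := mem_sharedVerts_of_eq hw₁ hww₁
    have hxw : ∀ x, g x = k → R x w := by
      intro x hx
      have hxS := hkS x hx
      obtain ⟨u, hu, hxu⟩ := hg.exists_out x 1 le_rfl (by omega)
      have huW := hf.mem_sharedVerts_of_adj (g := g) hd hxS (by omega) hxu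
      rw [hinj huW hw₁ (hu.trans hgw₁.symm)] at hxu
      have hfne : f x ≠ f w := fun h => hxS (mem_sharedVerts_of_eq hw h)
      rcases lt_or_gt_of_ne hfne with h | h
      · exact (hf.adj_of_lt hxS h).1
      · obtain ⟨v, hv, hxv⟩ := hf.exists_out x (f w) (hf.one_le w) h
        rcases eq_or_eq_of_tight hW hI hw₁ hww₁ hne (hv.trans hww₁) with rfl | rfl
        · exact absurd hxu (hd _ _ hxv)
        · exact hxv
    have hgwk : g w ≠ k := fun h => hkS w h hw
    rcases lt_or_gt_of_ne hgwk with h | h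
    · obtain ⟨u, hu, hxu⟩ := hg.exists_out x₀ (g w) (hg.one_le w) (by omega)
      have huW := hf.mem_sharedVerts_of_adj (g := g) hd (hkS x₀ hx₀) (by omega) hxu
      rw [hinj huW hw hu] at hxu
      exact hd _ _ (hxw x₀ hx₀) hxu
    · obtain ⟨x, hx, hxw'⟩ := hg.exists_in w k hkge h
      exact hd _ _ (hxw x hx) hxw'

open Classical in
lemma IsGrundy.card_add_card_le (hf : IsGrundy R f) (hg : IsGrundy R' g)
    (hd : ∀ u v, R u v → ¬ R' u v) (hn : Fintype.card V ≤ 8) :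
    (Finset.univ.image f).card + (Finset.univ.image g).card ≤ Fintype.card V + 2 := by
  have hd' : ∀ u v, R' u v → ¬ R u v := fun u v h h' => hd u v h' h
  have h1 := hf.two_mul_card_add_card_le hg hd
  have h2 := hg.two_mul_card_add_card_le hf hd'
  by_contra hcon
  have : ((Finset.univ.image g).card = 5 ∧ Fintype.card V = (Finset.univ.image f).card + 2) ∨
      ((Finset.univ.image f).card = 5 ∧ Fintype.card V = (Finset.univ.image g).card + 2) := by
    omega
  rcases this with ⟨hb, ha⟩ | ⟨hb, ha⟩
  · exact hf.not_tight hg hd hb ha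
  · exact hg.not_tight hf hd' hb ha

end Counting

/-! ### Greedy colorings have the Grundy property -/

/-- A cycle avoids every vertex without outgoing arcs, so such a vertex can be removed. -/
lemma transGen_of_no_out {V : Type*} {r r' : V → V → Prop} {v z : V}
    (hv : ∀ u, ¬ r v u) (hr : ∀ a b, a ≠ v → b ≠ v → r a b → r' a b)
    (h : Relation.TransGen r z z) : Relation.TransGen r' z z := by
  have hne : ∀ {x y}, Relation.TransGen r x y → x ≠ v := by
    rintro x y hxy rfl
    obtain ⟨c, hc, -⟩ := Relation.TransGen.head'_iff.1 hxy
    exact hv c hc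
  have hz := hne h
  have key : ∀ {x}, Relation.TransGen r x z → Relation.TransGen r' x z := by
    intro x hx
    induction hx using Relation.TransGen.head_induction_on with
    | single hab => exact .single (hr _ _ (hne (.single hab)) hz hab)
    | head hab hbc ih => exact .head (hr _ _ (hne (.single hab)) (hne hbc) hab) ih
  exact key h

/-- Adding to an acyclic set a vertex without out-neighbors in it keeps it acyclic. -/
lemma acyclicSet_insert_of_no_out {V : Type*} {D : Digraph V} (hD : ∀ v, ¬ D.Adj v v)
    {C : Set V} (hC : AcyclicSet D C) {v : V} (h : ∀ u ∈ C, ¬ D.Adj v u) :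
    AcyclicSet D (insert v C) := by
  intro z hz
  refine hC z (transGen_of_no_out (v := v) ?_ ?_ hz)
  · rintro u ⟨-, hu, hvu⟩
    rcases hu with rfl | hu
    · exact hD _ hvu
    · exact h u hu hvu
  · rintro a b ha hb ⟨ha', hb', hab⟩
    exact ⟨ha'.resolve_left ha, hb'.resolve_left hb, hab⟩

/-- Adding to an acyclic set a vertex without in-neighbors in it keeps it acyclic. -/
lemma acyclicSet_insert_of_no_in {V : Type*} {D : Digraph V} (hD : ∀ v, ¬ D.Adj v v)
    {C : Set V} (hC : AcyclicSet D C) {v : V} (h : ∀ u ∈ C, ¬ D.Adj u v) :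
    AcyclicSet D (insert v C) := by
  intro z hz
  refine hC z (Relation.transGen_swap.1 (transGen_of_no_out (v := v) ?_ ?_
    (Relation.transGen_swap.2 hz)))
  · rintro u ⟨hu, -, huv⟩
    rcases hu with rfl | hu
    · exact hD _ huv
    · exact h u hu huv
  · rintro a b ha hb ⟨hb', ha', hab⟩
    exact ⟨hb'.resolve_left hb, ha'.resolve_left ha, hab⟩

lemma acyclicSet_empty {V : Type*} (D : Digraph V) : AcyclicSet D ∅ := by
  intro z hz
  obtain ⟨c, hc, -⟩ := Relation.TransGen.head'_iff.1 hz
  exact hc.1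

section Greedy

variable {V : Type*} [Fintype V] (D : Digraph V) (e : Fin (Fintype.card V) ≃ V)

/-- The vertices of color `c` placed strictly before position `i`. -/
def earlierClass (i : Fin (Fintype.card V)) (c : ℕ) : Set V :=
  {v : V | ∃ j : Fin (Fintype.card V), ∃ _ : j < i, e j = v ∧ greedyColorAt D e j = c}

lemma greedyColorAt_eq (i : Fin (Fintype.card V)) :
    greedyColorAt D e i =
      sInf {c : ℕ | 1 ≤ c ∧ AcyclicSet D (insert (e i) (earlierClass D e i c))} := by
  rw [greedyColorAt]
  rfl

lemma greedyColorAt_mem (hD : ∀ v, ¬ D.Adj v v) (i : Fin (Fintype.card V)) :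
    1 ≤ greedyColorAt D e i ∧
      AcyclicSet D (insert (e i) (earlierClass D e i (greedyColorAt D e i))) := by
  have hne : {c : ℕ | 1 ≤ c ∧ AcyclicSet D (insert (e i) (earlierClass D e i c))}.Nonempty := by
    -- A color exceeding the sum of all colors has an empty class.
    refine ⟨(∑ j, greedyColorAt D e j) + 1, by omega, ?_⟩
    have hempty : earlierClass D e i ((∑ j, greedyColorAt D e j) + 1) = ∅ := by
      ext v
      simp only [Set.mem_empty_iff_false, iff_false]
      rintro ⟨j, -, -, hj⟩
      have := Finset.single_le_sum (f := fun j => greedyColorAt D e j)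
        (fun _ _ => Nat.zero_le _) (Finset.mem_univ j)
      omega
    rw [hempty]
    exact acyclicSet_insert_of_no_out hD (acyclicSet_empty D) (by simp)
  have := Nat.sInf_mem hne
  rw [← greedyColorAt_eq] at this
  exact this

lemma acyclicSet_earlierClass (hD : ∀ v, ¬ D.Adj v v) (i : Fin (Fintype.card V)) (c : ℕ) :
    AcyclicSet D (earlierClass D e i c) := by
  classical
  set J := Finset.univ.filter fun j => j < i ∧ greedyColorAt D e j = c with hJ
  rcases J.eq_empty_or_nonempty with h | h
  · have : earlierClass D e i c = ∅ := by
      ext v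
      simp only [Set.mem_empty_iff_false, iff_false]
      rintro ⟨j, hji, -, hj⟩
      have : j ∈ J := by simp [hJ, hji, hj]
      simp [h] at this
    rw [this]
    exact acyclicSet_empty D
  -- The class was last enlarged at position `m`, and it was acyclic at that moment.
  · obtain ⟨m, hm, hmax⟩ := J.exists_max_image id h
    obtain ⟨hmi, hmc⟩ : m < i ∧ greedyColorAt D e m = c := by simpa [hJ] using hm
    have heq : earlierClass D e i c =
        insert (e m) (earlierClass D e m (greedyColorAt D e m)) := by
      ext v
      constructor
      · rintro ⟨j, hji, rfl, hj⟩
        have hjm : j ≤ m := hmax j (by simp [hJ, hji, hj])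
        rcases hjm.eq_or_lt with rfl | hlt
        · exact Or.inl rfl
        · exact Or.inr ⟨j, hlt, rfl, hj.trans hmc.symm⟩
      · rintro (rfl | ⟨j, hjm, rfl, hj⟩)
        · exact ⟨m, hmi, rfl, hmc⟩
        · exact ⟨j, hjm.trans hmi, rfl, hj.trans hmc⟩
    rw [heq]
    exact (greedyColorAt_mem D e hD m).2

lemma isGrundy_greedyColoring (hD : ∀ v, ¬ D.Adj v v) :
    IsGrundy D.Adj (greedyColoring D e) := by
  have hcol : ∀ i j u, u ∈ earlierClass D e i j → greedyColoring D e u = j := by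
    rintro i j u ⟨m, -, rfl, hm⟩
    simpa [greedyColoring] using hm
  have hcyc : ∀ v i, 1 ≤ i → i < greedyColoring D e v →
      ¬ AcyclicSet D (insert v (earlierClass D e (e.symm v) i)) := by
    intro v i hi hlt hac
    rw [greedyColoring, greedyColorAt_eq] at hlt
    exact Nat.notMem_of_lt_sInf hlt ⟨hi, by simpa using hac⟩
  refine ⟨fun v => (greedyColorAt_mem D e hD _).1, fun v i hi hlt => ?_, fun v i hi hlt => ?_⟩
  · by_contra hcon
    exact hcyc v i hi hlt (acyclicSet_insert_of_no_out hD (acyclicSet_earlierClass D e hD _ i)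
      fun u hu hvu => hcon ⟨u, hcol _ _ _ hu, hvu⟩)
  · by_contra hcon
    exact hcyc v i hi hlt (acyclicSet_insert_of_no_in hD (acyclicSet_earlierClass D e hD _ i)
      fun u hu huv => hcon ⟨u, hcol _ _ _ hu, huv⟩)

lemma exists_isGrundy_card_eq_digrundy (hD : ∀ v, ¬ D.Adj v v) :
    ∃ f : V → ℕ, IsGrundy D.Adj f ∧ (Finset.univ.image f).card = digrundy D := by
  have hmem : digrundy D ∈ {k : ℕ | ∃ e : Fin (Fintype.card V) ≃ V, greedyCount D e = k} := by
    -- The supremum is attained because the set is nonempty and bounded by the order.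
    apply Nat.sSup_mem
    · exact ⟨_, (Fintype.equivFin V).symm, rfl⟩
    · refine ⟨Fintype.card V, ?_⟩
      rintro k ⟨e, rfl⟩
      exact Finset.card_image_le
  obtain ⟨e, he⟩ := hmem
  exact ⟨greedyColoring D e, isGrundy_greedyColoring D e hD, he⟩

end Greedy

/-- If `D` is a digraph of order `n ≤ 8`, then
`dG(D) + dG(Dᶜ) ≤ n + 2`. -/
theorem digrundy_nordhaus_gaddum_le_eight {V : Type*} [Fintype V]
    (D : Digraph V) (hD : ∀ v : V, ¬ D.Adj v v)
    (hn : Fintype.card V ≤ 8) :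
    digrundy D + digrundy (digraphCompl D) ≤ Fintype.card V + 2 := by
  obtain ⟨f, hf, hfc⟩ := exists_isGrundy_card_eq_digrundy D hD
  obtain ⟨g, hg, hgc⟩ := exists_isGrundy_card_eq_digrundy (digraphCompl D) fun v h => h.1 rfl
  rw [← hfc, ← hgc]
  convert hf.card_add_card_le hg (fun u v h h' => h'.2 h) hn

end Paper
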